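/- Let G be a finite group with a normal subgroup V such that V is an elementary abelian 2-group, the quotient W = G/V is an elementary abelian 2-group, and V is of maximal rank in G. Then 4·rank(W) ≤ 8·rank(V ∩ Z(G)) + (rank V)², i.e. rank(W) ≤ 2·rank(V^W) + (rank V)²/4. -/

import Mathlib

/-- A subgroup is an elementary abelian 2-group: every element squares to the
identity (such a subgroup is automatically abelian). -/
def IsElemAbelian2 {G : Type*} [Group G] (A : Subgroup G) : Prop :=
  (∀ a ∈ A, a * a = 1) ∧ ∀ a ∈ A, ∀ b ∈ A, a * b = b * a

/-- A subgroup `V` of `G` has maximal rank if every elementary abelian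
2-subgroup `A` of `G` satisfies `|A| ≤ |V|`. -/
def IsMaximalRank2 {G : Type*} [Group G] (V : Subgroup G) : Prop :=
  ∀ A : Subgroup G, IsElemAbelian2 A → Nat.card A ≤ Nat.card V

/-! Let `C` be the centralizer of `V`, and split `|G/V| = |C/V| * |G/C|`.

Since `V` contains every involution of `C`, squaring induces an anisotropic quadratic map over
`𝔽₂` from `C/V` to `V ∩ Z(G)`, whose polar form is the commutator; by Chevalley–Warning
`rank (C/V) ≤ 2 * rank (V ∩ Z(G))`.

Since `G` is nilpotent, elements of `V` that generate it modulo `[V, G]` have the same centralizer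
as `V` itself. Each of them has at most `|[V, G]|` conjugates, so with `u = rank [V, G]` we get
`rank (G/C) ≤ (rank V - u) * u ≤ (rank V)² / 4`. -/

open Module
open scoped commutatorElement

section AnisotropicQuadraticMap

theorem exists_mvPolynomial_totalDegree_le_two_eval_eq {R M ι : Type*} [CommRing R]
    [AddCommGroup M] [Module R M] [Fintype ι] [LinearOrder ι] (Q : QuadraticForm R M)
    (b : Basis ι R M) :
    ∃ p : MvPolynomial ι R, p.totalDegree ≤ 2 ∧
      ∀ x, MvPolynomial.eval x p = Q (∑ i, x i • b i) := by
  refine ⟨∑ i, ∑ j, MvPolynomial.C (Q.toBilin b (b i) (b j)) *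
    (MvPolynomial.X i * MvPolynomial.X j), ?_, fun x => ?_⟩
  · refine (MvPolynomial.IsHomogeneous.sum _ _ 2 fun i _ =>
      MvPolynomial.IsHomogeneous.sum _ _ 2 fun j _ => ?_).totalDegree_le
    exact ((MvPolynomial.isHomogeneous_X R i).mul
      (MvPolynomial.isHomogeneous_X R j)).C_mul _
  · conv_rhs => rw [← QuadraticMap.toQuadraticMap_toBilin Q b]
    simp only [LinearMap.BilinMap.toQuadraticMap_apply, map_sum, map_smul, map_mul,
      LinearMap.sum_apply, LinearMap.smul_apply, MvPolynomial.eval_C, MvPolynomial.eval_X,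
      smul_eq_mul, Finset.mul_sum]
    rw [Finset.sum_comm]
    exact Finset.sum_congr rfl fun i _ => Finset.sum_congr rfl fun j _ => by ring

theorem finrank_le_two_mul_finrank_of_anisotropic {K X Y : Type*} [Field K] [Finite K]
    [AddCommGroup X] [AddCommGroup Y] [Module K X] [Module K Y] [Module.Finite K X]
    [Module.Finite K Y] {Q : QuadraticMap K X Y} (hQ : Q.Anisotropic) :
    finrank K X ≤ 2 * finrank K Y := by
  classical
  have := Fintype.ofFinite K
  by_contra! hlt
  let b := finBasis K X
  let c := finBasis K Y
  choose p hdeg hp using fun k =>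
    exists_mvPolynomial_totalDegree_le_two_eval_eq ((c.coord k).compQuadraticMap Q) b
  have hsum : ∑ k, (p k).totalDegree < Fintype.card (Fin (finrank K X)) :=
    calc ∑ k, (p k).totalDegree ≤ 2 * finrank K Y := by
          simpa [mul_comm] using Finset.sum_le_card_nsmul Finset.univ _ 2 fun k _ => hdeg k
      _ < _ := by simpa using hlt
  have common_zero_iff (x : Fin (finrank K X) → K) :
      (∀ k, MvPolynomial.eval x (p k) = 0) ↔ x = 0 := by
    have eval_iff : (∀ k, MvPolynomial.eval x (p k) = 0) ↔ Q (∑ i, x i • b i) = 0 := by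
      simp only [hp, LinearMap.compQuadraticMap_apply, c.forall_coord_eq_zero_iff]
    rw [eval_iff]
    refine ⟨fun h => funext fun i => ?_, by rintro rfl; simp⟩
    simpa [Finsupp.single_apply] using congrArg (b.repr · i) (hQ _ h)
  have hdvd := char_dvd_card_solutions_of_fintype_sum_lt (ringChar K) hsum
  rw [Fintype.card_eq_nat_card, Nat.card_congr (Equiv.subtypeEquivRight common_zero_iff),
    Nat.card_unique, Nat.dvd_one] at hdvd
  exact CharP.ringChar_ne_one hdvd

/-- The quadratic map over `ZMod 2` given by a function with biadditive polar form. Biadditivity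
forces the function to vanish at `0`. -/
def quadraticMapOfPolarAddLeft {A B : Type*} [AddCommGroup A] [AddCommGroup B]
    [Module (ZMod 2) A] [Module (ZMod 2) B] (f : A → B)
    (hf : ∀ x y z, QuadraticMap.polar f (x + y) z =
      QuadraticMap.polar f x z + QuadraticMap.polar f y z) :
    QuadraticMap (ZMod 2) A B :=
  have map_zero : f 0 = 0 := by simpa [QuadraticMap.polar] using hf 0 0 0
  have eq_zero_or_one : ∀ a : ZMod 2, a = 0 ∨ a = 1 := by decide
  QuadraticMap.ofPolar f
    (fun a x => by obtain rfl | rfl := eq_zero_or_one a <;> simp [map_zero])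
    hf
    (fun a x y => by
      obtain rfl | rfl := eq_zero_or_one a <;> simp [map_zero, QuadraticMap.polar])

theorem card_le_card_sq_of_polar_add_left {A B : Type*} [AddCommGroup A] [AddCommGroup B]
    [Finite A] [Finite B] (hA : ∀ x : A, x + x = 0) (hB : ∀ y : B, y + y = 0) (f : A → B)
    (hf : ∀ x y z, QuadraticMap.polar f (x + y) z =
      QuadraticMap.polar f x z + QuadraticMap.polar f y z)
    (anisotropic : ∀ x, f x = 0 → x = 0) : Nat.card A ≤ Nat.card B ^ 2 := by
  let _ : Module (ZMod 2) A := AddCommGroup.zmodModule fun x => (two_nsmul x).trans (hA x)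
  let _ : Module (ZMod 2) B := AddCommGroup.zmodModule fun y => (two_nsmul y).trans (hB y)
  rw [natCard_eq_pow_finrank (K := ZMod 2) (V := A), natCard_eq_pow_finrank (K := ZMod 2) (V := B),
    Nat.card_zmod, ← pow_mul, mul_comm]
  exact Nat.pow_le_pow_right two_pos <|
    finrank_le_two_mul_finrank_of_anisotropic (Q := quadraticMapOfPolarAddLeft f hf) anisotropic

end AnisotropicQuadraticMap

section CentralSquares

open Subgroup

variable {G : Type*} [Group G]

theorem commute_of_mul_self_eq_one (h : ∀ x : G, x * x = 1) (x y : G) : Commute x y :=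
  Commute.of_orderOf_dvd_two (fun z => orderOf_dvd_of_pow_eq_one ((pow_two z).trans (h z))) x y

theorem commutatorElement_eq_sq_mul_div_sq_div_sq {x : G} (hx : x * x ∈ center G) (y : G) :
    ⁅x, y⁆ = x * y * (x * y) / (x * x) / (y * y) :=
  calc ⁅x, y⁆ = x * y * (x * y) * (y⁻¹ * (x * x)⁻¹) * y⁻¹ := by group
    _ = x * y * (x * y) * ((x * x)⁻¹ * y⁻¹) * y⁻¹ := by
      rw [mem_center_iff.1 (inv_mem hx) y⁻¹]
    _ = x * y * (x * y) / (x * x) / (y * y) := by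
      simp only [div_eq_mul_inv, mul_inv_rev, mul_assoc]

theorem commutatorElement_mul_left_of_mem_center {x y z : G} (h : ⁅y, z⁆ ∈ center G) :
    ⁅x * y, z⁆ = ⁅x, z⁆ * ⁅y, z⁆ := by
  rw [commutatorElement_mul_left_eq_conj_mul, mem_center_iff.1 h x, mul_inv_cancel_right,
    mem_center_iff.1 h]

theorem index_le_card_sq_of_mul_self_eq_one_iff_mem {N Z : Subgroup G} [N.Normal] [Finite (G ⧸ N)]
    [Finite Z] (hN : N ≤ center G) (mem_iff : ∀ g, g * g = 1 ↔ g ∈ N) (hZN : Z ≤ N)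
    (sq_mem : ∀ g, g * g ∈ Z) : N.index ≤ Nat.card Z ^ 2 := by
  have mul_self_quotient (x : G ⧸ N) : x * x = 1 := by
    induction x using QuotientGroup.induction_on with
    | H g => exact (QuotientGroup.eq_one_iff (g * g)).2 (hZN (sq_mem g))
  have mul_self_Z (z : Z) : z * z = 1 := Subtype.ext ((mem_iff z).2 (hZN z.2))
  let _ : CommGroup (G ⧸ N) :=
    { mul_comm := commute_of_mul_self_eq_one mul_self_quotient }
  let _ : CommGroup Z :=
    { mul_comm := commute_of_mul_self_eq_one mul_self_Z }
  have sq_mem_center (g : G) : g * g ∈ center G := hN (hZN (sq_mem g))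
  let sq : G ⧸ N → Z := Quotient.lift (fun g => ⟨g * g, sq_mem g⟩) fun g h hgh => by
    obtain ⟨n, hn, rfl⟩ : ∃ n ∈ N, h = g * n :=
      ⟨g⁻¹ * h, QuotientGroup.leftRel_apply.1 hgh, (mul_inv_cancel_left g h).symm⟩
    have comm : Commute n g := (mem_center_iff.1 (hN hn) g).symm
    have sq_eq : g * n * (g * n) = g * g := by
      rw [comm.mul_mul_mul_comm, (mem_iff n).2 hn, mul_one]
    exact Subtype.ext sq_eq.symm
  let f : Additive (G ⧸ N) → Additive Z := fun x => .ofMul (sq x.toMul)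
  have coe_polar (g h : G) :
      ((QuadraticMap.polar f (.ofMul g) (.ofMul h)).toMul : G) = ⁅g, h⁆ :=
    (commutatorElement_eq_sq_mul_div_sq_div_sq (sq_mem_center g) h).symm
  refine card_le_card_sq_of_polar_add_left (A := Additive (G ⧸ N)) (B := Additive Z)
    mul_self_quotient mul_self_Z f (fun x y z => ?_) fun x hx => ?_
  · obtain ⟨x, rfl⟩ := QuotientGroup.mk_surjective x
    obtain ⟨y, rfl⟩ := QuotientGroup.mk_surjective y
    obtain ⟨z, rfl⟩ := QuotientGroup.mk_surjective z
    have commutator_mem : ⁅y, z⁆ ∈ center G :=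
      coe_polar y z ▸ hN (hZN (QuadraticMap.polar f (.ofMul y) (.ofMul z)).toMul.2)
    refine Subtype.ext ?_
    calc _ = ⁅x * y, z⁆ := coe_polar (x * y) z
      _ = ⁅x, z⁆ * ⁅y, z⁆ := commutatorElement_mul_left_of_mem_center commutator_mem
      _ = _ := by rw [← coe_polar x z, ← coe_polar y z]; rfl
  · obtain ⟨g, rfl⟩ := QuotientGroup.mk_surjective x
    exact (QuotientGroup.eq_one_iff g).2 ((mem_iff g).1 (congrArg Subtype.val hx))

end CentralSquares

section Nilpotent

open Subgroup

variable {G : Type*} [Group G]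

theorem eq_bot_of_le_commutator_top [Group.IsNilpotent G] {K : Subgroup G} (hK : K ≤ ⁅K, ⊤⁆) :
    K = ⊥ := by
  obtain ⟨n, hn⟩ := Subgroup.nilpotent_iff_lowerCentralSeries.1 ‹Group.IsNilpotent G›
  suffices h : ∀ n, K ≤ (⊤ : Subgroup G).lowerCentralSeries n from le_bot_iff.1 (hn ▸ h n)
  intro n
  induction n with
  | zero => exact le_top
  | succ n ih => exact hK.trans (commutator_mono ih le_rfl)

theorem le_of_le_sup_commutator_top [Group.IsNilpotent G] {H K : Subgroup G} [H.Normal]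
    (hK : K ≤ H ⊔ ⁅K, ⊤⁆) : K ≤ H := by
  let π := QuotientGroup.mk' H
  have map_le : K.map π ≤ ⁅K.map π, ⊤⁆ :=
    calc K.map π ≤ H.map π ⊔ ⁅K.map π, (⊤ : Subgroup G).map π⁆ := by
          rw [← map_commutator, ← Subgroup.map_sup]
          exact map_mono hK
      _ = ⁅K.map π, ⊤⁆ := by
          rw [QuotientGroup.map_mk'_self, bot_sup_eq,
            map_top_of_surjective π (QuotientGroup.mk'_surjective H)]
  simpa [π] using (Subgroup.map_eq_bot_iff _).1 (eq_bot_of_le_commutator_top map_le)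

theorem centralizer_le_centralizer_of_le_closure_sup_commutator [Group.IsNilpotent G]
    {V : Subgroup G} {T : Set G} (hT : commutator G ≤ centralizer T)
    (hV : V ≤ closure T ⊔ ⁅V, ⊤⁆) : centralizer T ≤ centralizer (V : Set G) := by
  have : (centralizer T).Normal := .of_commutator_le G hT
  refine le_centralizer_iff.1 (le_of_le_sup_commutator_top ?_)
  exact hV.trans (sup_le_sup_right (closure_le_centralizer_centralizer T) _)

theorem index_centralizer_singleton_le {V : Subgroup G} [Finite (⁅V, ⊤⁆ : Subgroup G)] {v : G}
    (hv : v ∈ V) : (centralizer {v}).index ≤ Nat.card (⁅V, ⊤⁆ : Subgroup G) := by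
  have mem_commutator (x : G ⧸ centralizer {v}) :
      (quotientCentralizerEmbedding v x : G) ∈ (⁅V, ⊤⁆ : Subgroup G) := by
    induction x using QuotientGroup.induction_on with
    | H g =>
      rw [quotientCentralizerEmbedding_apply, commutator_comm]
      exact commutator_mem_commutator (mem_top g) hv
  let e (x : G ⧸ centralizer {v}) : (⁅V, ⊤⁆ : Subgroup G) := ⟨_, mem_commutator x⟩
  have e_injective : Function.Injective e := fun x y hxy =>
    (quotientCentralizerEmbedding v).injective (Subtype.ext (Subtype.mk.inj hxy))
  exact Nat.card_le_card_of_injective e e_injective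

theorem index_centralizer_le_card_pow {V : Subgroup G} [Finite (⁅V, ⊤⁆ : Subgroup G)]
    {T : Finset G} (hT : (T : Set G) ⊆ V) :
    (centralizer (T : Set G)).index ≤ Nat.card (⁅V, ⊤⁆ : Subgroup G) ^ T.card :=
  calc (centralizer (T : Set G)).index = (⨅ v : T, centralizer {(v : G)}).index := by
        rw [centralizer_eq_iInf, iInf_subtype']; rfl
    _ ≤ ∏ v : T, (centralizer {(v : G)}).index := index_iInf_le _
    _ ≤ ∏ _v : T, Nat.card (⁅V, ⊤⁆ : Subgroup G) :=
        Finset.prod_le_prod' fun v _ => index_centralizer_singleton_le (hT v.2)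
    _ = _ := by simp

theorem two_mul_card_le_of_lt {H K : Subgroup G} [Finite K] (h : H < K) :
    2 * Nat.card H ≤ Nat.card K := by
  have card_eq : Nat.card H * H.relIndex K = Nat.card K := by
    simpa using relIndex_mul_relIndex ⊥ H K bot_le h.le
  have relIndex_ne_zero : H.relIndex K ≠ 0 :=
    right_ne_zero_of_mul (card_eq.trans_ne Nat.card_pos.ne')
  have relIndex_ne_one : H.relIndex K ≠ 1 := relIndex_eq_one.not.2 h.not_ge
  rw [← card_eq, mul_comm]
  exact Nat.mul_le_mul_left _ ((Nat.two_le_iff _).2 ⟨relIndex_ne_zero, relIndex_ne_one⟩)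

theorem exists_finset_le_closure_sup_two_pow_card_mul_le [Finite G] {U V : Subgroup G}
    (hUV : U ≤ V) :
    ∃ T : Finset G, (T : Set G) ⊆ V ∧ V ≤ Subgroup.closure T ⊔ U ∧
      2 ^ T.card * Nat.card U ≤ Nat.card V := by
  classical
  induction U using WellFoundedGT.induction with
  | ind U ih =>
  by_cases hVU : V ≤ U
  · exact ⟨∅, by simp, le_sup_of_le_right hVU, by simpa using card_le_of_le hUV⟩
  · obtain ⟨x, hxV, hxU⟩ := SetLike.not_le_iff_exists.1 hVU
    have lt : U < Subgroup.closure {x} ⊔ U := by simpa using hxU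
    obtain ⟨T, hTV, hgen, hcard⟩ := ih _ lt (sup_le (by simpa using hxV) hUV)
    refine ⟨insert x T, by simpa [Set.insert_subset_iff] using ⟨hxV, hTV⟩, ?_, ?_⟩
    · rwa [Finset.coe_insert, Set.insert_eq, Set.union_comm, Subgroup.closure_union, sup_assoc]
    · calc 2 ^ (insert x T).card * Nat.card U ≤ 2 ^ (T.card + 1) * Nat.card U := by
            gcongr
            · exact one_le_two
            · exact Finset.card_insert_le x T
        _ = 2 ^ T.card * (2 * Nat.card U) := by ring
        _ ≤ 2 ^ T.card * Nat.card (Subgroup.closure {x} ⊔ U : Subgroup G) := by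
            gcongr
            exact two_mul_card_le_of_lt lt
        _ ≤ Nat.card V := hcard

end Nilpotent

section ElementaryAbelian

open Subgroup

variable {G : Type*} [Group G] {V : Subgroup G}

theorem isElemAbelian2_closure {S : Set G} (sq_eq_one : ∀ x ∈ S, x * x = 1)
    (comm : ∀ x ∈ S, ∀ y ∈ S, x * y = y * x) : IsElemAbelian2 (Subgroup.closure S) := by
  have := isMulCommutative_closure comm
  have comm' (a) (ha : a ∈ Subgroup.closure S) (b) (hb : b ∈ Subgroup.closure S) :
      a * b = b * a := setLike_mul_comm ha hb
  refine ⟨fun a ha => ?_, comm'⟩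
  induction ha using Subgroup.closure_induction with
  | mem x hx => exact sq_eq_one x hx
  | one => exact one_mul 1
  | mul x y hx hy ihx ihy =>
    rw [(show Commute y x from comm' y hy x hx).mul_mul_mul_comm, ihx, ihy, one_mul]
  | inv x _ ih => rw [← mul_inv_rev, ih, inv_one]

theorem IsElemAbelian2.le_centralizer (hV : IsElemAbelian2 V) : V ≤ centralizer (V : Set G) :=
  fun a ha b hb => hV.2 b hb a ha

theorem IsMaximalRank2.maximal_isElemAbelian2 [Finite G] (hmax : IsMaximalRank2 V)
    (hV : IsElemAbelian2 V) : Maximal IsElemAbelian2 V :=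
  ⟨hV, fun A hA hVA => (Subgroup.eq_of_le_of_card_ge hVA (hmax A hA)).ge⟩

theorem mem_of_mem_centralizer_of_mul_self_eq_one (hV : Maximal IsElemAbelian2 V) {c : G}
    (hc : c ∈ centralizer (V : Set G)) (hc2 : c * c = 1) : c ∈ V := by
  have hA : IsElemAbelian2 (Subgroup.closure (insert c (V : Set G))) := by
    refine isElemAbelian2_closure (Set.forall_mem_insert.2 ⟨hc2, hV.1.1⟩) ?_
    rintro x (rfl | hx) y (rfl | hy)
    · rfl
    · exact (hc y hy).symm
    · exact hc x hx
    · exact hV.1.2 x hx y hy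
  have V_le := (Set.subset_insert c (V : Set G)).trans Subgroup.subset_closure
  exact hV.2 hA V_le (Subgroup.subset_closure (Set.mem_insert c V))

theorem IsElemAbelian2.mul_self_mem_center (hV : IsElemAbelian2 V) (hG : commutator G ≤ V) {c : G}
    (hc : c ∈ centralizer (V : Set G)) : c * c ∈ center G := by
  refine mem_center_iff.2 fun g => ?_
  have hcg : ⁅c, g⁆ ∈ V := hG (commutator_mem_commutator (mem_top c) (mem_top g))
  refine (commutatorElement_eq_one_iff_mul_comm.1 ?_).symm
  rw [commutatorElement_mul_left_eq_conj_mul, ← hc _ hcg, mul_inv_cancel_right, hV.1 _ hcg]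

theorem commutator_le_of_quotient_mul_self_eq_one [V.Normal] (hW : ∀ w : G ⧸ V, w * w = 1) :
    commutator G ≤ V :=
  Normal.quotient_commutative_iff_commutator_le.1 <| .of_comm <|
    commute_of_mul_self_eq_one hW

theorem isPGroup_two_of_quotient_mul_self_eq_one [V.Normal] (hV : IsElemAbelian2 V)
    (hW : ∀ w : G ⧸ V, w * w = 1) : IsPGroup 2 G := fun g =>
  ⟨2, by simpa [pow_succ, mul_assoc] using hV.1 _ ((QuotientGroup.eq_one_iff (g * g)).1 (hW g))⟩

theorem relIndex_centralizer_le_card_inf_center_sq [Finite G] [V.Normal]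
    (hV : Maximal IsElemAbelian2 V) (hW : ∀ w : G ⧸ V, w * w = 1) :
    V.relIndex (centralizer V) ≤ Nat.card (V ⊓ center G : Subgroup G) ^ 2 := by
  have hVC := hV.1.le_centralizer
  rw [← Nat.card_congr (subgroupOfEquivOfLe (inf_le_left.trans hVC)).toEquiv]
  refine index_le_card_sq_of_mul_self_eq_one_iff_mem (N := V.subgroupOf (centralizer V))
    (fun v hv => mem_center_iff.2 fun c => Subtype.ext (c.2 v hv).symm)
    (fun c => ⟨fun hc => mem_of_mem_centralizer_of_mul_self_eq_one hV c.2 (congrArg Subtype.val hc),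
      fun hc => Subtype.ext (hV.1.1 c hc)⟩)
    (comap_mono inf_le_left) fun c => ?_
  exact ⟨(QuotientGroup.eq_one_iff _).1 (hW (c : G)),
    hV.1.mul_self_mem_center (commutator_le_of_quotient_mul_self_eq_one hW) c.2⟩

theorem exists_index_centralizer_le_card_commutator_pow [Finite G] [V.Normal]
    (hV : IsElemAbelian2 V) (hW : ∀ w : G ⧸ V, w * w = 1) :
    ∃ m, (centralizer (V : Set G)).index ≤ Nat.card (⁅V, ⊤⁆ : Subgroup G) ^ m ∧
      2 ^ m * Nat.card (⁅V, ⊤⁆ : Subgroup G) ≤ Nat.card V := by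
  have := Fact.mk Nat.prime_two
  have := (isPGroup_two_of_quotient_mul_self_eq_one hV hW).isNilpotent
  obtain ⟨T, hTV, hgen, hcard⟩ :=
    exists_finset_le_closure_sup_two_pow_card_mul_le (commutator_le_left V ⊤)
  have commutator_le : commutator G ≤ centralizer (T : Set G) :=
    (commutator_le_of_quotient_mul_self_eq_one hW).trans
      (hV.le_centralizer.trans (centralizer_le hTV))
  refine ⟨T.card, ?_, hcard⟩
  rw [← (centralizer_le_centralizer_of_le_closure_sup_commutator commutator_le hgen).antisymm
    (centralizer_le hTV)]
  exact index_centralizer_le_card_pow hTV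

end ElementaryAbelian

theorem stmt2_general {G : Type*} [Group G] [Finite G] {V : Subgroup G} [V.Normal]
    (hV : Maximal IsElemAbelian2 V) (hW : ∀ w : G ⧸ V, w * w = 1) {nV nW nZ : ℕ}
    (hnV : Nat.card V = 2 ^ nV) (hnW : Nat.card (G ⧸ V) = 2 ^ nW)
    (hnZ : Nat.card (V ⊓ Subgroup.center G : Subgroup G) = 2 ^ nZ) :
    4 * nW ≤ 8 * nZ + nV ^ 2 := by
  obtain ⟨m, index_le, card_le⟩ := exists_index_centralizer_le_card_commutator_pow hV.1 hW
  obtain ⟨u, -, hu⟩ := (Nat.dvd_prime_pow Nat.prime_two).1 <|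
    hnV ▸ Subgroup.card_dvd_of_le (Subgroup.commutator_le_left V ⊤)
  have add_le : m + u ≤ nV := by
    rwa [hu, hnV, ← pow_add, Nat.pow_le_pow_iff_right one_lt_two] at card_le
  have le_add : nW ≤ 2 * nZ + u * m := by
    rw [← Nat.pow_le_pow_iff_right one_lt_two]
    calc 2 ^ nW = V.relIndex (.centralizer V) * (Subgroup.centralizer (V : Set G)).index := by
          rw [Subgroup.relIndex_mul_index hV.1.le_centralizer, Subgroup.index_eq_card, hnW]
      _ ≤ (2 ^ nZ) ^ 2 * (2 ^ u) ^ m :=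
          Nat.mul_le_mul (hnZ ▸ relIndex_centralizer_le_card_inf_center_sq hV hW) (hu ▸ index_le)
      _ = 2 ^ (2 * nZ + u * m) := by ring
  have amgm : 4 * (u * m) ≤ (m + u) ^ 2 := by nlinarith [sq_nonneg ((m : ℤ) - u)]
  have := Nat.pow_le_pow_left add_le 2
  omega

theorem stmt2 (G : Type*) [Group G] [Finite G] (V : Subgroup G) [V.Normal]
    (hV : IsElemAbelian2 V) (hmax : IsMaximalRank2 V)
    (hW : ∀ w : G ⧸ V, w * w = 1)
    (nV nW nZ : ℕ)
    (hnV : Nat.card V = 2 ^ nV)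
    (hnW : Nat.card (G ⧸ V) = 2 ^ nW)
    (hnZ : Nat.card (V ⊓ Subgroup.center G : Subgroup G) = 2 ^ nZ) :
    4 * nW ≤ 8 * nZ + nV ^ 2 :=
  stmt2_general (hmax.maximal_isElemAbelian2 hV) hW hnV hnW hnZ
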